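/- Let R be a commutative semiring and M a flat R-module. If R is additively cancellative then M is additively cancellative, and if R is negative free then M is negative free. -/

import Mathlib

/-!
A flat `M` inherits every implication "`f n = g n` implies `h n = k n`" between linear equations
over `R` (`IsSemiflat.lTensor_eq_of_imp`): a solution of `M ⊗ f = M ⊗ g` comes from
`M ⊗ eq(f, g)`, on which `h` and `k` agree. Cancellativity of `R` is such an implication on `R³`
(`a + c = b + c` implies `a = b`), and negative freeness is one on `R²` (`a + b = 0` implies
`a = 0` and `b = 0`); under `M ⊗ Rⁿ ≅ Mⁿ` the transferred implications are the claims about `M`.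
-/

/-!
Over an additively cancellative (resp. negative free) commutative semiring, every
flat module is additively cancellative (resp. negative free).
-/

universe u

open TensorProduct

/-- `M` is flat over the commutative semiring `R`: tensoring with `M` preserves
equalizers (hence all finite limits). -/
def IsSemiflat (R : Type u) [CommSemiring R] (M : Type u) [AddCommMonoid M] [Module R M] : Prop :=
  ∀ (N P : Type u) [AddCommMonoid N] [AddCommMonoid P] [Module R N] [Module R P]
    (f g : N →ₗ[R] P),
    Function.Injective (LinearMap.lTensor M (LinearMap.eqLocus f g).subtype) ∧
    LinearMap.range (LinearMap.lTensor M (LinearMap.eqLocus f g).subtype) =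
      LinearMap.eqLocus (LinearMap.lTensor M f) (LinearMap.lTensor M g)

/-- Implications between linear equations over `R` persist after tensoring with a flat module.
Only the surjectivity half of flatness is needed. -/
theorem IsSemiflat.lTensor_eq_of_imp {R : Type u} [CommSemiring R] {M : Type u} [AddCommMonoid M]
    [Module R M] (hM : IsSemiflat R M) {N P Q : Type u} [AddCommMonoid N] [AddCommMonoid P]
    [AddCommMonoid Q] [Module R N] [Module R P] [Module R Q] (f g : N →ₗ[R] P) (h k : N →ₗ[R] Q)
    (himp : ∀ n, f n = g n → h n = k n) (t : M ⊗[R] N)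
    (ht : LinearMap.lTensor M f t = LinearMap.lTensor M g t) :
    LinearMap.lTensor M h t = LinearMap.lTensor M k t := by
  have hmem : t ∈ LinearMap.range (LinearMap.lTensor M (LinearMap.eqLocus f g).subtype) := by
    rw [(hM N P f g).2]
    exact ht
  obtain ⟨s, rfl⟩ := hmem
  have hcomp : h ∘ₗ (LinearMap.eqLocus f g).subtype = k ∘ₗ (LinearMap.eqLocus f g).subtype :=
    LinearMap.ext fun n => himp n n.2
  rw [← LinearMap.lTensor_comp_apply, ← LinearMap.lTensor_comp_apply, hcomp]

theorem tmul_one_inj {R : Type u} [CommSemiring R] {M : Type u} [AddCommMonoid M]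
    [Module R M] {x y : M} (h : x ⊗ₜ[R] (1 : R) = y ⊗ₜ[R] (1 : R)) : x = y := by
  simpa using congrArg (TensorProduct.rid R M) h

/-- A flat module over an additively cancellative (resp. negative free) commutative
semiring is additively cancellative (resp. negative free). -/
theorem isSemiflat_cancellative_and_negativeFree (R : Type u) [CommSemiring R]
    (M : Type u) [AddCommMonoid M] [Module R M] (hM : IsSemiflat R M) :
    ((∀ x y z : R, x + z = y + z → x = y) → ∀ x y z : M, x + z = y + z → x = y) ∧
    ((∀ x y : R, x + y = 0 → x = 0 ∧ y = 0) → ∀ x y : M, x + y = 0 → x = 0 ∧ y = 0) := by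
  constructor
  · intro hR x y z hxyz
    let p₁ : R × R × R →ₗ[R] R := LinearMap.fst R R (R × R)
    let p₂ : R × R × R →ₗ[R] R := LinearMap.fst R R R ∘ₗ LinearMap.snd R R (R × R)
    let p₃ : R × R × R →ₗ[R] R := LinearMap.snd R R R ∘ₗ LinearMap.snd R R (R × R)
    have key := hM.lTensor_eq_of_imp (p₁ + p₃) (p₂ + p₃) p₁ p₂ (fun n hn => hR _ _ _ hn)
      (x ⊗ₜ (1, 0, 0) + y ⊗ₜ (0, 1, 0) + z ⊗ₜ (0, 0, 1))
      (by simp [p₁, p₂, p₃, ← TensorProduct.add_tmul, hxyz])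
    exact tmul_one_inj (R := R) (by simpa [p₁, p₂] using key)
  · intro hR x y hxy
    let p₁ : R × R →ₗ[R] R := LinearMap.fst R R R
    let p₂ : R × R →ₗ[R] R := LinearMap.snd R R R
    have ht : LinearMap.lTensor M (p₁ + p₂) (x ⊗ₜ (1, 0) + y ⊗ₜ (0, 1)) =
        LinearMap.lTensor M (0 : R × R →ₗ[R] R) (x ⊗ₜ (1, 0) + y ⊗ₜ (0, 1)) := by
      simp [p₁, p₂, ← TensorProduct.add_tmul, hxy]
    have key₁ := hM.lTensor_eq_of_imp (p₁ + p₂) 0 p₁ 0 (fun n hn => (hR _ _ hn).1) _ ht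
    have key₂ := hM.lTensor_eq_of_imp (p₁ + p₂) 0 p₂ 0 (fun n hn => (hR _ _ hn).2) _ ht
    exact ⟨tmul_one_inj (R := R) (by simpa [p₁] using key₁),
      tmul_one_inj (R := R) (by simpa [p₂] using key₂)⟩
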